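/- Let h_c(z) = 1 + 4z/3 + 2z²/3 and let 0 < r ≤ 1/2. Then for every z ∈ ℂ with |z| = r one has Re h_c(z) ≥ 1 − 4r/3 + 2r²/3 and |h_c(z)| ≥ 1 − 4r/3 + 2r²/3, with equality in both at z = −r; that is, min_{|z|=r} Re h_c(z) = min_{|z|=r} |h_c(z)| = h_c(−r) = 1 − 4r/3 + 2r²/3. -/

import Mathlib

open Complex

/-- The cardioid function `h_c(z) = 1 + 4z/3 + 2z²/3`. -/
noncomputable def hC (z : ℂ) : ℂ := 1 + 4 * z / 3 + 2 * z ^ 2 / 3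

theorem re_hC (z : ℂ) :
    (hC z).re = 1 + 4 * z.re / 3 + 2 * (2 * z.re ^ 2 - ‖z‖ ^ 2) / 3 := by
  have hre : (hC z).re = 1 + 4 * z.re / 3 + 2 * (z.re ^ 2 - z.im ^ 2) / 3 := by
    simp [hC, pow_two]
  rw [hre, Complex.sq_norm, normSq_apply]
  ring

theorem hC_neg_ofReal (r : ℝ) :
    hC (-(r : ℂ)) = ((1 - 4 * r / 3 + 2 * r ^ 2 / 3 : ℝ) : ℂ) := by
  simp only [hC]
  push_cast
  ring

theorem norm_hC_neg_ofReal (r : ℝ) :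
    ‖hC (-(r : ℂ))‖ = 1 - 4 * r / 3 + 2 * r ^ 2 / 3 := by
  have hsq : 1 - 4 * r / 3 + 2 * r ^ 2 / 3 = (2 * (1 - r) ^ 2 + 1) / 3 := by ring
  rw [hC_neg_ofReal, Complex.norm_of_nonneg]
  rw [hsq]
  positivity

theorem le_re_hC_of_norm_le {r : ℝ} (hr : r ≤ 1 / 2) {z : ℂ} (hz : ‖z‖ ≤ r) :
    1 - 4 * r / 3 + 2 * r ^ 2 / 3 ≤ (hC z).re := by
  have hre : -r ≤ z.re := (abs_le.mp ((abs_re_le_norm z).trans hz)).1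
  have hprod : 0 ≤ (z.re + r) * (1 + z.re - r) :=
    mul_nonneg (by linarith) (by linarith)
  have hnorm : ‖z‖ ^ 2 ≤ r ^ 2 := by gcongr
  have hdiff : (hC z).re - (1 - 4 * r / 3 + 2 * r ^ 2 / 3) =
      4 / 3 * ((z.re + r) * (1 + z.re - r)) + 2 / 3 * (r ^ 2 - ‖z‖ ^ 2) := by
    rw [re_hC]
    ring
  linarith

theorem stmt11_general (r : ℝ) (hr : r ≤ 1 / 2) :
    (∀ z : ℂ, ‖z‖ ≤ r →
        1 - 4 * r / 3 + 2 * r ^ 2 / 3 ≤ (hC z).re ∧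
        1 - 4 * r / 3 + 2 * r ^ 2 / 3 ≤ ‖hC z‖) ∧
      (hC (-(r : ℂ))).re = 1 - 4 * r / 3 + 2 * r ^ 2 / 3 ∧
      ‖hC (-(r : ℂ))‖ = 1 - 4 * r / 3 + 2 * r ^ 2 / 3 := by
  refine ⟨fun z hz ↦ ?_, by rw [hC_neg_ofReal, ofReal_re], norm_hC_neg_ofReal r⟩
  have hre := le_re_hC_of_norm_le hr hz
  exact ⟨hre, hre.trans (re_le_norm _)⟩

/-- for `0 < r ≤ 1/2`, on `|z| = r` both `Re h_c(z)` and `|h_c(z)|`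
are minimized at `z = -r` with minimal value `h_c(-r) = 1 - 4r/3 + 2r²/3`. -/
theorem stmt11 (r : ℝ) (hr0 : 0 < r) (hr : r ≤ 1 / 2) :
    (∀ z : ℂ, ‖z‖ = r →
        1 - 4 * r / 3 + 2 * r ^ 2 / 3 ≤ (hC z).re ∧
        1 - 4 * r / 3 + 2 * r ^ 2 / 3 ≤ ‖hC z‖) ∧
      (hC (-(r : ℂ))).re = 1 - 4 * r / 3 + 2 * r ^ 2 / 3 ∧
      ‖hC (-(r : ℂ))‖ = 1 - 4 * r / 3 + 2 * r ^ 2 / 3 := by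
  obtain ⟨hmin, hattained⟩ := stmt11_general r hr
  exact ⟨fun z hz ↦ hmin z hz.le, hattained⟩
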